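/- Let n ≥ 2. If a social choice function f : S₀ⁿ → A is efficient and strategy-proof, then f is tops-only. -/

import Mathlib

/-- The set of alternatives: the closed interval [0,1]. -/
abbrev A : Type := Set.Icc (0:ℝ) 1

def zeroA : A := ⟨0, by constructor <;> norm_num⟩
def oneA : A := ⟨1, by constructor <;> norm_num⟩

/-- A preference: a complete (total) and transitive binary relation on A. -/
structure Pref : Type where
  rel : A → A → Prop
  total : ∀ a b : A, rel a b ∨ rel b a
  trans : ∀ a b c : A, rel a b → rel b c → rel a c

/-- Strict part of a preference. -/
def Pref.P (R : Pref) (a b : A) : Prop := R.rel a b ∧ ¬ R.rel b a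

/-- `p` is a peak of `R`: `R` is single-peaked with peak `p`. -/
def Pref.IsPeak (R : Pref) (p : A) : Prop :=
  ∀ a b : A, ((p ≤ a ∧ a < b) ∨ (b < a ∧ a ≤ p)) → R.P a b

/-- Single-peaked preferences. -/
def SinglePeaked (R : Pref) : Prop := ∃ p : A, R.IsPeak p

/-- The completely indifferent preference R⁰. -/
def R0 : Pref :=
  ⟨fun _ _ => True, fun _ _ => Or.inl trivial, fun _ _ _ _ _ => trivial⟩

/-- The augmented domain S₀ = S ∪ {R⁰}. -/
def S0 : Type := {R : Pref // SinglePeaked R ∨ R = R0}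

/-- The completely indifferent profile R^{0N}. -/
def indiffProfile (n : ℕ) : Fin n → S0 := fun _ => ⟨R0, Or.inr rfl⟩

open Classical in
/-- The peak of a single-peaked preference (junk value `zeroA` otherwise). -/
noncomputable def peak (R : Pref) : A :=
  if h : SinglePeaked R then h.choose else zeroA

/-- τ̲(R): the smallest peak among non-indifferent agents (as a real number). -/
noncomputable def tmin {n : ℕ} (R : Fin n → S0) : ℝ :=
  sInf {x : ℝ | ∃ i : Fin n, (R i).1 ≠ R0 ∧ ((peak (R i).1 : ℝ) = x)}

/-- τ̄(R): the largest peak among non-indifferent agents (as a real number). -/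
noncomputable def tmax {n : ℕ} (R : Fin n → S0) : ℝ :=
  sSup {x : ℝ | ∃ i : Fin n, (R i).1 ≠ R0 ∧ ((peak (R i).1 : ℝ) = x)}

/-- Onto-ness. -/
def Onto {n : ℕ} (f : (Fin n → S0) → A) : Prop := ∀ a : A, ∃ R : Fin n → S0, f R = a

/-- (Individual) strategy-proofness. -/
def StrategyProof {n : ℕ} (f : (Fin n → S0) → A) : Prop :=
  ∀ (R : Fin n → S0) (i : Fin n) (Ri' : S0),
    (R i).1.rel (f R) (f (Function.update R i Ri'))

/-- No profitable deviation by the coalition `S`. -/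
def CoalitionSP {n : ℕ} (f : (Fin n → S0) → A) (S : Finset (Fin n)) : Prop :=
  ¬ ∃ R R' : Fin n → S0,
      (∀ i ∉ S, R' i = R i) ∧
      (∀ i ∈ S, (R i).1.rel (f R') (f R)) ∧
      (∃ j ∈ S, (R j).1.P (f R') (f R))

/-- Group strategy-proofness. -/
def GroupSP {n : ℕ} (f : (Fin n → S0) → A) : Prop :=
  ∀ S : Finset (Fin n), S.Nonempty → CoalitionSP f S

/-- Pairwise strategy-proofness. -/
def PairwiseSP {n : ℕ} (f : (Fin n → S0) → A) : Prop :=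
  ∀ S : Finset (Fin n), S.Nonempty → S.card ≤ 2 → CoalitionSP f S

/-- No deviation making every member of `S` strictly better off. -/
def WeakCoalitionSP {n : ℕ} (f : (Fin n → S0) → A) (S : Finset (Fin n)) : Prop :=
  ¬ ∃ R R' : Fin n → S0,
      (∀ i ∉ S, R' i = R i) ∧
      (∀ i ∈ S, (R i).1.P (f R') (f R))

/-- Weak group strategy-proofness. -/
def WeakGroupSP {n : ℕ} (f : (Fin n → S0) → A) : Prop :=
  ∀ S : Finset (Fin n), S.Nonempty → WeakCoalitionSP f S

/-- `a` is efficient at the profile `R`. -/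
def EfficientAt {n : ℕ} (R : Fin n → S0) (a : A) : Prop :=
  ¬ ∃ b : A, b ≠ a ∧ (∀ i : Fin n, (R i).1.rel b a) ∧ (∃ j : Fin n, (R j).1.P b a)

/-- Efficiency of a social choice function. -/
def Efficient {n : ℕ} (f : (Fin n → S0) → A) : Prop := ∀ R : Fin n → S0, EfficientAt R (f R)

/-- The tops-only property. -/
def TopsOnly {n : ℕ} (f : (Fin n → S0) → A) : Prop :=
  ∀ R R' : Fin n → S0,
    (∀ i : Fin n, (R i).1 = R0 ↔ (R' i).1 = R0) →
    (∀ i : Fin n, (R i).1 ≠ R0 → peak (R i).1 = peak (R' i).1) →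
    f R = f R'

/-- Target rules with a default. -/
def IsTargetRule {n : ℕ} (f : (Fin n → S0) → A) : Prop :=
  ∃ x y : A, f (indiffProfile n) = y ∧
    ∀ R : Fin n → S0, R ≠ indiffProfile n →
      ((tmin R ≤ (x : ℝ) ∧ (x : ℝ) ≤ tmax R) → f R = x) ∧
      ((x : ℝ) < tmin R → (f R : ℝ) = tmin R) ∧
      (tmax R < (x : ℝ) → (f R : ℝ) = tmax R)

/-!
Strategy-proofness alone keeps the outcome fixed when an agent changes preference but not peak, as
long as both outcomes lie on the same side of that peak `p`; the point is to show that such a change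
cannot carry the outcome across `p`. Give every agent with peak at most `p` a preference with peak
exactly `p`. If these preferences rank everything below `p` above everything beyond it, an outcome
at most `p` stays at most `p`, so by efficiency it becomes `p`; if they rank everything beyond `p`
above everything below it, an outcome exceeding `p` does not move at all. But an agent whose new
peak is `p` cannot move the outcome away from `p`, so the second replacement yields `p` as soon as
the first does. Hence whether the outcome is at most `p` depends only on the other agents.
-/

section Preferences

lemma SinglePeaked.isPeak_peak {R : Pref} (h : SinglePeaked R) : R.IsPeak (peak R) := by
  rw [peak, dif_pos h]
  exact h.choose_spec

namespace Pref

variable {R : Pref} {p a b : A}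

lemma IsPeak.le_of_rel (hp : R.IsPeak p) (hb : p ≤ b) (h : R.rel a b) : a ≤ b :=
  not_lt.1 fun hba => (hp b a (.inl ⟨hb, hba⟩)).2 h

lemma IsPeak.ge_of_rel (hp : R.IsPeak p) (hb : b ≤ p) (h : R.rel a b) : b ≤ a :=
  not_lt.1 fun hab => (hp b a (.inr ⟨hab, hb⟩)).2 h

lemma IsPeak.eq_of_rel (hp : R.IsPeak p) (h : R.rel a p) : a = p :=
  le_antisymm (hp.le_of_rel le_rfl h) (hp.ge_of_rel le_rfl h)

/-- The preference that a utility function `u` represents. -/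
def ofUtility (u : A → ℝ) : Pref where
  rel a b := u b ≤ u a
  total _ _ := le_total _ _
  trans _ _ _ hab hbc := hbc.trans hab

lemma isPeak_ofUtility {u : A → ℝ} (hmono : StrictMonoOn u (Set.Iic p))
    (hanti : StrictAntiOn u (Set.Ici p)) : (ofUtility u).IsPeak p := by
  have strict_of_lt {a b : A} (h : u b < u a) : (ofUtility u).P a b := ⟨h.le, h.not_ge⟩
  rintro a b (⟨hpa, hab⟩ | ⟨hba, hap⟩)
  · exact strict_of_lt (hanti hpa (hpa.trans hab.le) hab)
  · exact strict_of_lt (hmono (hba.le.trans hap) hap hba)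

/-- The preference with peak `p` for which every alternative below `p` is better than every
alternative above `p`: on `[0,1]` the utility is nonnegative up to `p` and negative beyond. -/
noncomputable def lowerFirst (p : A) : Pref :=
  ofUtility fun z => if z ≤ p then (z : ℝ) else -z

/-- The preference with peak `p` for which every alternative above `p` is better than every
alternative below `p`: on `[0,1]` the utility is nonnegative from `p` on and negative before. -/
noncomputable def upperFirst (p : A) : Pref :=
  ofUtility fun z => if p ≤ z then 1 - (z : ℝ) else z - 1

lemma isPeak_lowerFirst (p : A) : (lowerFirst p).IsPeak p := by
  refine isPeak_ofUtility (fun a ha b hb hab => ?_) fun a ha b _ hab => ?_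
  · simpa only [if_pos (Set.mem_Iic.1 ha), if_pos (Set.mem_Iic.1 hb), Subtype.coe_lt_coe] using hab
  · have hab' : (a : ℝ) < b := hab
    have := a.2.1
    simp only [if_neg (ha.trans_lt hab).not_ge]
    split_ifs <;> linarith

lemma isPeak_upperFirst (p : A) : (upperFirst p).IsPeak p := by
  refine isPeak_ofUtility (fun a _ b hb hab => ?_) fun a ha b hb hab => ?_
  · have hab' : (a : ℝ) < b := hab
    have := b.2.2
    simp only [if_neg (hab.trans_le hb).not_ge]
    split_ifs <;> linarith
  · simpa only [if_pos (Set.mem_Ici.1 ha), if_pos (Set.mem_Ici.1 hb), sub_lt_sub_iff_left,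
      Subtype.coe_lt_coe] using hab

lemma le_of_lowerFirst_rel (hb : b ≤ p) (h : (lowerFirst p).rel a b) : a ≤ p := by
  by_contra! hpa
  have hpa' : (p : ℝ) < a := hpa
  simp only [lowerFirst, ofUtility, if_pos hb, if_neg hpa.not_ge] at h
  linarith [p.2.1, b.2.1]

lemma le_of_upperFirst_rel (hb : p ≤ b) (h : (upperFirst p).rel a b) : p ≤ a := by
  by_contra! hap
  have hap' : (a : ℝ) < p := hap
  simp only [upperFirst, ofUtility, if_pos hb, if_neg hap.not_ge] at h
  linarith [p.2.2, b.2.2]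

end Pref

end Preferences

namespace S0

/-- `Pref.lowerFirst` as an element of the domain. -/
noncomputable def lowerFirst (p : A) : S0 := ⟨.lowerFirst p, .inl ⟨p, Pref.isPeak_lowerFirst p⟩⟩

/-- `Pref.upperFirst` as an element of the domain. -/
noncomputable def upperFirst (p : A) : S0 := ⟨.upperFirst p, .inl ⟨p, Pref.isPeak_upperFirst p⟩⟩

lemma isPeak_lowerFirst (p : A) : (lowerFirst p).1.IsPeak p := Pref.isPeak_lowerFirst p

lemma isPeak_upperFirst (p : A) : (upperFirst p).1.IsPeak p := Pref.isPeak_upperFirst p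

end S0

lemma piecewise_induction {ι : Type*} [DecidableEq ι] {α : ι → Type*} {g R : ∀ i, α i}
    {Q : (∀ i, α i) → Prop} (s : Finset ι) (base : Q R)
    (step : ∀ T, ∀ k ∈ s, T k = R k → Q T → Q (Function.update T k (g k))) :
    Q (s.piecewise g R) := by
  induction s using Finset.induction_on with
  | empty => rwa [Finset.piecewise_empty]
  | insert k s hk ih =>
    rw [Finset.piecewise_insert]
    exact step _ k (s.mem_insert_self k) (s.piecewise_eq_of_notMem g R hk)
      (ih fun T j hj => step T j (Finset.mem_insert_of_mem hj))

section SocialChoice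

variable {n : ℕ} {f : (Fin n → S0) → A} {R : Fin n → S0} {i : Fin n} {r : S0} {p : A}

namespace StrategyProof

lemma rel_update (hSP : StrategyProof f) (R : Fin n → S0) (i : Fin n) (r : S0) :
    r.1.rel (f (Function.update R i r)) (f R) := by
  simpa using hSP (Function.update R i r) i (R i)

lemma update_lowerFirst_le (hSP : StrategyProof f) (hR : f R ≤ p) :
    f (Function.update R i (S0.lowerFirst p)) ≤ p :=
  Pref.le_of_lowerFirst_rel hR (hSP.rel_update R i (S0.lowerFirst p))

lemma update_upperFirst_eq (hSP : StrategyProof f) {q : A} (hi : (R i).1.IsPeak q) (hqp : q ≤ p)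
    (hR : p ≤ f R) : f (Function.update R i (S0.upperFirst p)) = f R := by
  have new_rel := hSP.rel_update R i (S0.upperFirst p)
  have new_ge : p ≤ f (Function.update R i (S0.upperFirst p)) :=
    Pref.le_of_upperFirst_rel hR new_rel
  exact le_antisymm ((S0.isPeak_upperFirst p).le_of_rel hR new_rel)
    (hi.le_of_rel (hqp.trans new_ge) (hSP R i _))

lemma update_eq_of_isPeak_of_eq (hSP : StrategyProof f) (hr : r.1.IsPeak p) (hR : f R = p) :
    f (Function.update R i r) = p :=
  hr.eq_of_rel (hR ▸ hSP.rel_update R i r)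

end StrategyProof

lemma Efficient.le_of_isPeak (hEff : Efficient f) (hi : (R i).1.IsPeak p)
    (hR : ∀ j, (R j).1 = R0 ∨ ∃ q, p ≤ q ∧ (R j).1.IsPeak q) : p ≤ f R := by
  by_contra! hlt
  refine hEff R ⟨p, hlt.ne', fun j => ?_, i, hi _ _ (.inr ⟨hlt, le_rfl⟩)⟩
  rcases hR j with hj | ⟨q, hpq, hj⟩
  · rw [hj]
    trivial
  · exact (hj _ _ (.inr ⟨hlt, hpq⟩)).1

open Classical in
/-- The agents with peak at most `p`; indifferent agents are never among them. -/
noncomputable def lowAgents (R : Fin n → S0) (p : A) : Finset (Fin n) :=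
  {j | ∃ q ≤ p, (R j).1.IsPeak q}

lemma mem_lowAgents {j : Fin n} : j ∈ lowAgents R p ↔ ∃ q ≤ p, (R j).1.IsPeak q := by
  simp [lowAgents]

lemma eq_R0_or_isPeak_of_notMem_lowAgents {j : Fin n} (hj : j ∉ lowAgents R p) :
    (R j).1 = R0 ∨ ∃ q, p ≤ q ∧ (R j).1.IsPeak q := by
  rcases (R j).2 with ⟨q, hq⟩ | h0
  · exact .inr ⟨q, le_of_not_ge fun hqp => hj (mem_lowAgents.2 ⟨q, hqp, hq⟩), hq⟩
  · exact .inl h0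

lemma lowAgents_update (hi : i ∈ lowAgents R p) {q : A} (hqp : q ≤ p) (hr : r.1.IsPeak q) :
    lowAgents (Function.update R i r) p = lowAgents R p := by
  ext j
  obtain rfl | hji := eq_or_ne j i
  · simpa only [hi, iff_true, mem_lowAgents, Function.update_self] using ⟨q, hqp, hr⟩
  · simp only [mem_lowAgents, Function.update_of_ne hji]

namespace StrategyProof

lemma piecewise_lowerFirst_eq (hSP : StrategyProof f) (hEff : Efficient f)
    (hlow : (lowAgents R p).Nonempty) (hR : f R ≤ p) :
    f ((lowAgents R p).piecewise (fun _ => S0.lowerFirst p) R) = p := by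
  obtain ⟨i, hi⟩ := hlow
  refine le_antisymm ?_ (hEff.le_of_isPeak (i := i) ?_ fun j => ?_)
  · exact piecewise_induction (Q := fun T => f T ≤ p) _ hR
      fun T k _ _ hT => hSP.update_lowerFirst_le hT
  · rw [Finset.piecewise_eq_of_mem _ _ _ hi]
    exact S0.isPeak_lowerFirst p
  · by_cases hj : j ∈ lowAgents R p
    · rw [Finset.piecewise_eq_of_mem _ _ _ hj]
      exact .inr ⟨p, le_rfl, S0.isPeak_lowerFirst p⟩
    · rw [Finset.piecewise_eq_of_notMem _ _ _ hj]
      exact eq_R0_or_isPeak_of_notMem_lowAgents hj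

lemma piecewise_upperFirst_eq (hSP : StrategyProof f) (hR : p ≤ f R) :
    f ((lowAgents R p).piecewise (fun _ => S0.upperFirst p) R) = f R := by
  refine piecewise_induction (Q := fun T => f T = f R) _ rfl fun T k hk hTk hT => ?_
  obtain ⟨q, hqp, hq⟩ := mem_lowAgents.1 hk
  exact (hSP.update_upperFirst_eq (hTk ▸ hq) hqp (hT ▸ hR)).trans hT

lemma le_iff_piecewise_lowerFirst_eq (hSP : StrategyProof f) (hEff : Efficient f)
    (hlow : (lowAgents R p).Nonempty) :
    f R ≤ p ↔ f ((lowAgents R p).piecewise (fun _ => S0.lowerFirst p) R) = p := by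
  refine ⟨hSP.piecewise_lowerFirst_eq hEff hlow, fun lower_eq => ?_⟩
  have upper_eq : f ((lowAgents R p).piecewise (fun _ => S0.upperFirst p) R) = p := by
    rw [← Finset.piecewise_idem_right _ _ (fun _ => S0.lowerFirst p) R]
    exact piecewise_induction (Q := fun T => f T = p) _ lower_eq
      fun T k _ _ hT => hSP.update_eq_of_isPeak_of_eq (S0.isPeak_upperFirst p) hT
  by_contra! hlt
  exact hlt.ne' ((hSP.piecewise_upperFirst_eq hlt.le).symm.trans upper_eq)

lemma update_le_iff (hSP : StrategyProof f) (hEff : Efficient f) (hi : i ∈ lowAgents R p) {q : A}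
    (hqp : q ≤ p) (hr : r.1.IsPeak q) : f (Function.update R i r) ≤ p ↔ f R ≤ p := by
  have hlow := lowAgents_update hi hqp hr
  rw [hSP.le_iff_piecewise_lowerFirst_eq hEff (hlow ▸ ⟨i, hi⟩),
    hSP.le_iff_piecewise_lowerFirst_eq hEff ⟨i, hi⟩, hlow]
  have same_profile : (lowAgents R p).piecewise (fun _ => S0.lowerFirst p) (Function.update R i r) =
      (lowAgents R p).piecewise (fun _ => S0.lowerFirst p) R :=
    Finset.piecewise_congr _ (fun _ _ => rfl) fun j hj =>
      Function.update_of_ne (ne_of_mem_of_not_mem hi hj).symm _ _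
  rw [same_profile]

lemma update_eq_of_isPeak (hSP : StrategyProof f) (hEff : Efficient f)
    (hi : (R i).1.IsPeak p) (hr : r.1.IsPeak p) : f (Function.update R i r) = f R := by
  have same_side := hSP.update_le_iff hEff (mem_lowAgents.2 ⟨p, le_rfl, hi⟩) le_rfl hr
  have old_rel := hSP R i r
  have new_rel := hSP.rel_update R i r
  rcases le_or_gt (f R) p with hle | hlt
  · exact le_antisymm (hi.ge_of_rel (same_side.2 hle) old_rel) (hr.ge_of_rel hle new_rel)
  · have hlt' := not_le.1 (mt same_side.1 hlt.not_ge)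
    exact le_antisymm (hr.le_of_rel hlt.le new_rel) (hi.le_of_rel hlt'.le old_rel)

end StrategyProof

end SocialChoice

/-- For n ≥ 2, every efficient and strategy-proof SCF is
tops-only. -/
theorem stmt_3 (n : ℕ) (hn : 2 ≤ n) (f : (Fin n → S0) → A)
    (hEff : Efficient f) (hSP : StrategyProof f) : TopsOnly f := by
  intro R R' hR0 hpeak
  rw [← Finset.piecewise_univ R' R]
  refine (piecewise_induction (Q := fun T => f T = f R) _ rfl fun T k _ hTk hT => ?_).symm
  rw [← hT]
  by_cases hk : (R k).1 = R0
  · have same_pref : R' k = T k := hTk ▸ Subtype.ext (((hR0 k).1 hk).trans hk.symm)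
    rw [same_pref, Function.update_eq_self]
  · have hpeak_old := ((R k).2.resolve_right hk).isPeak_peak
    have hpeak_new := ((R' k).2.resolve_right (mt (hR0 k).2 hk)).isPeak_peak
    rw [← hpeak k hk] at hpeak_new
    exact hSP.update_eq_of_isPeak hEff (hTk ▸ hpeak_old) hpeak_new
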